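/- arXiv:1905.02891 — 5 statements merged into one kernel-verified Lean document; each statement's English description precedes it below -/
import Mathlib

section
/- The optimal values of the mixed-integer problem (1) and of the continuous problem (2) coincide: the supremum of F₁(γ,P) over all feasible (γ,P) of problem (1) equals the supremum of F₂(P) over all feasible P of problem (2). -/
/-! The two suprema agree because each value of either problem is dominated by a value of the other.

From (1) to (2): transmit `γ u b k * P u k` to base station `b`. This only removes interference, and
an active link `(u, b, k)` sees none from its own user, since `γ u b' k = 0` for `b' ≠ b`.

From (2) to (1): let user `u` transmit the total power `Q u k = ∑ b, P u b k` on band `k`. Write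
`D` for the noise plus the interference of the other users at `b`, `G = g u b k * Q u k`, and
`x = P u b k / Q u k`. The rate of the link in (2) is `log ((D + G) / (D + (1 - x) * G))`. It is
convex in `x` and vanishes at `x = 0`, so it is at most `x` times its value at `x = 1`
(`rate_le_share`), which is the rate in (1) of the link `(u, b, k)` when `u` is assigned to `b`.
Summed over `b`, the rates of `u` on band `k` in (2) are at most an average of its possible rates
in (1), hence at most the best one (`exists_best_station`), and `γ` selects that station. -/

/-- The interferers of the link `(u, b)` are all the streams of the other users and the streams of
`u` itself to the other base stations. -/
lemma sum_erase_prod {U B : Type*} [Fintype U] [Fintype B] [DecidableEq U] [DecidableEq B]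
    (f : U × B → ℝ) (u : U) (b : B) :
    ∑ p ∈ (Finset.univ : Finset (U × B)).erase (u, b), f p =
      ∑ v ∈ Finset.univ.erase u, ∑ b', f (v, b') + ∑ b' ∈ Finset.univ.erase b, f (u, b') := by
  have h1 := Finset.add_sum_erase Finset.univ f (Finset.mem_univ (u, b))
  have h2 := Finset.add_sum_erase Finset.univ (fun v => ∑ b', f (v, b')) (Finset.mem_univ u)
  have h3 := Finset.add_sum_erase Finset.univ (fun b' => f (u, b')) (Finset.mem_univ b)
  rw [Fintype.sum_prod_type] at h1
  linarith

/-- Sending only the share `x` of a user's received power `G` as useful signal, the rest being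
interference, yields at most the share `x` of the full rate (concavity of the logarithm). -/
lemma rate_le_share {D G x : ℝ} (hD : 0 < D) (hG : 0 ≤ G) (hx0 : 0 ≤ x) (hx1 : x ≤ 1) :
    Real.logb 2 (1 + x * G / (D + (1 - x) * G)) ≤ x * Real.logb 2 (1 + G / D) := by
  have hE : 0 < D + (1 - x) * G := by
    have := mul_nonneg (sub_nonneg.2 hx1) hG
    linarith
  have hDG : 0 < D + G := by linarith
  have e1 : 1 + x * G / (D + (1 - x) * G) = (D + G) / (D + (1 - x) * G) := by
    rw [eq_div_iff hE.ne', add_mul, div_mul_cancel₀ _ hE.ne']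
    ring
  have e2 : 1 + G / D = (D + G) / D := by field_simp
  have hc := strictConcaveOn_log_Ioi.concaveOn.2 (Set.mem_Ioi.2 hD) (Set.mem_Ioi.2 hDG) hx0
    (sub_nonneg.2 hx1) (by ring)
  simp only [smul_eq_mul] at hc
  have e3 : x * D + (1 - x) * (D + G) = D + (1 - x) * G := by ring
  rw [e3] at hc
  have h2 : 0 < Real.log 2 := Real.log_pos (by norm_num)
  rw [e1, e2, Real.logb, Real.logb, Real.log_div hDG.ne' hE.ne', Real.log_div hDG.ne' hD.ne',
    ← mul_div_assoc]
  apply div_le_div_of_nonneg_right _ h2.le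
  linarith

/-- One user on one band: splitting the power among the base stations is no better than sending
all of it to a suitable one. Here `D b` is the noise plus the other users' interference at `b`. -/
lemma exists_best_station {B : Type*} [Fintype B] [Nonempty B] [DecidableEq B]
    (D g p : B → ℝ) (hD : ∀ b, 0 < D b) (hg : ∀ b, 0 ≤ g b) (hp : ∀ b, 0 ≤ p b) :
    ∃ c, ∑ b, Real.logb 2 (1 + g b * p b / (D b + ∑ b' ∈ Finset.univ.erase b, g b * p b')) ≤
      Real.logb 2 (1 + g c * (∑ b, p b) / D c) := by
  set Q := ∑ b, p b with hQ
  obtain ⟨c, hc⟩ := Finite.exists_max fun b => Real.logb 2 (1 + g b * Q / D b)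
  refine ⟨c, ?_⟩
  have hle : ∀ b, p b ≤ Q := fun b => Finset.single_le_sum (fun i _ => hp i) (Finset.mem_univ b)
  have hQ0 : 0 ≤ Q := Finset.sum_nonneg fun i _ => hp i
  rcases hQ0.eq_or_lt with h0 | hpos
  · have hz : ∀ b, p b = 0 := fun b => le_antisymm (h0 ▸ hle b) (hp b)
    simp [hz, ← h0]
  · calc _ ≤ ∑ b, p b / Q * Real.logb 2 (1 + g b * Q / D b) := by
          refine Finset.sum_le_sum fun b _ => ?_
          have h := rate_le_share (hD b) (mul_nonneg (hg b) hQ0) (div_nonneg (hp b) hQ0)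
            ((div_le_one hpos).2 (hle b))
          have e1 : p b / Q * (g b * Q) = g b * p b := by field_simp
          have e2 : (1 - p b / Q) * (g b * Q) = ∑ b' ∈ Finset.univ.erase b, g b * p b' := by
            rw [← Finset.mul_sum, sub_mul, e1]
            have := Finset.add_sum_erase Finset.univ p (Finset.mem_univ b)
            rw [hQ, ← this]
            ring
          rwa [e1, e2] at h
      _ ≤ ∑ b, p b / Q * Real.logb 2 (1 + g c * Q / D c) :=
          Finset.sum_le_sum fun b _ => mul_le_mul_of_nonneg_left (hc b) (div_nonneg (hp b) hQ0)
      _ = Real.logb 2 (1 + g c * Q / D c) := by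
          rw [← Finset.sum_mul, ← Finset.sum_div, ← hQ, div_self hpos.ne', one_mul]

/-- The optimal value (supremum) of the mixed-integer problem (1) equals the
optimal value (supremum) of the continuous-variable problem (2). -/
theorem optimal_values_coincide
    (U B K : Type*) [Fintype U] [Fintype B] [Fintype K]
    [Nonempty U] [Nonempty B] [Nonempty K]
    [DecidableEq U] [DecidableEq B]
    (g : U → B → K → ℝ) (σ2 : B → K → ℝ) (W : K → ℝ) (Pbar : U → ℝ)
    (hg : ∀ u b k, 0 ≤ g u b k) (hσ : ∀ b k, 0 < σ2 b k)
    (hW : ∀ k, 0 < W k) (hPbar : ∀ u, 0 < Pbar u) :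
    sSup {r : ℝ | ∃ (γ : U → B → K → ℝ) (P : U → K → ℝ),
        (∀ u b k, γ u b k = 0 ∨ γ u b k = 1) ∧
        (∀ u k, (∑ b, γ u b k) ≤ 1) ∧
        (∀ u k, 0 ≤ P u k) ∧
        (∀ u, (∑ k, P u k) ≤ Pbar u) ∧
        r = ∑ u, ∑ b, ∑ k, γ u b k * W k *
          Real.logb 2 (1 + g u b k * P u k /
            (σ2 b k + ∑ v ∈ Finset.univ.erase u, g v b k * P v k))} =
    sSup {r : ℝ | ∃ P : U → B → K → ℝ,
        (∀ u b k, 0 ≤ P u b k) ∧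
        (∀ u, (∑ b, ∑ k, P u b k) ≤ Pbar u) ∧
        r = ∑ u, ∑ b, ∑ k, W k *
          Real.logb 2 (1 + g u b k * P u b k /
            (σ2 b k + ∑ p ∈ (Finset.univ : Finset (U × B)).erase (u, b),
              g p.1 b k * P p.1 p.2 k))} := by
  apply csSup_eq_csSup_of_forall_exists_le
  · rintro r ⟨γ, P, hγ, hγ1, hP, hPb, rfl⟩
    have hγ0 : ∀ u b k, 0 ≤ γ u b k := fun u b k => by rcases hγ u b k with h | h <;> simp [h]
    refine ⟨_, ⟨fun u b k => γ u b k * P u k, fun u b k => mul_nonneg (hγ0 u b k) (hP u k),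
      fun u => ?_, rfl⟩, ?_⟩
    · rw [Finset.sum_comm]
      refine le_trans (Finset.sum_le_sum fun k _ => ?_) (hPb u)
      rw [← Finset.sum_mul]
      exact mul_le_of_le_one_left (hP u k) (hγ1 u k)
    · refine Finset.sum_le_sum fun u _ => Finset.sum_le_sum fun b _ =>
        Finset.sum_le_sum fun k _ => ?_
      rcases hγ u b k with h | h
      · simp [h]
      · have hoff : ∑ b' ∈ Finset.univ.erase b, γ u b' k ≤ 0 := by
          have h1 := Finset.add_sum_erase Finset.univ (fun b' => γ u b' k) (Finset.mem_univ b)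
          have h2 := hγ1 u k
          simp only [h] at h1
          linarith
        simp only [h, one_mul]
        refine mul_le_mul_of_nonneg_left ?_ (hW k).le
        have hI0 : 0 ≤ ∑ p ∈ (Finset.univ : Finset (U × B)).erase (u, b),
            g p.1 b k * (γ p.1 p.2 k * P p.1 k) :=
          Finset.sum_nonneg fun p _ => mul_nonneg (hg _ _ _) (mul_nonneg (hγ0 _ _ _) (hP _ _))
        have hI : ∑ p ∈ (Finset.univ : Finset (U × B)).erase (u, b),
            g p.1 b k * (γ p.1 p.2 k * P p.1 k) ≤
            ∑ v ∈ Finset.univ.erase u, g v b k * P v k := by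
          rw [sum_erase_prod]
          have hself : ∑ b' ∈ Finset.univ.erase b, g u b k * (γ u b' k * P u k) ≤ 0 := by
            rw [← Finset.mul_sum, ← Finset.sum_mul]
            exact mul_nonpos_of_nonneg_of_nonpos (hg u b k)
              (mul_nonpos_of_nonpos_of_nonneg hoff (hP u k))
          have hother : ∑ v ∈ Finset.univ.erase u, ∑ b', g v b k * (γ v b' k * P v k) ≤
              ∑ v ∈ Finset.univ.erase u, g v b k * P v k := by
            refine Finset.sum_le_sum fun v _ => ?_
            rw [← Finset.mul_sum, ← Finset.sum_mul]
            exact mul_le_mul_of_nonneg_left (mul_le_of_le_one_left (hP v k) (hγ1 v k)) (hg v b k)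
          linarith
        have hS := hσ b k
        have hN : 0 ≤ g u b k * P u k := mul_nonneg (hg u b k) (hP u k)
        refine Real.logb_le_logb_of_le (by norm_num) ?_ ?_
        · have : 0 ≤ g u b k * P u k / (σ2 b k + ∑ v ∈ Finset.univ.erase u, g v b k * P v k) :=
            div_nonneg hN (by linarith)
          linarith
        · gcongr
  · rintro r ⟨P, hP, hPb, rfl⟩
    have hQ : ∀ u k, 0 ≤ ∑ b, P u b k := fun u k => Finset.sum_nonneg fun b _ => hP u b k
    choose c hc using fun u k => exists_best_station
      (fun b => σ2 b k + ∑ v ∈ Finset.univ.erase u, g v b k * ∑ b', P v b' k)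
      (fun b => g u b k) (fun b => P u b k)
      (fun b => add_pos_of_pos_of_nonneg (hσ b k)
        (Finset.sum_nonneg fun v _ => mul_nonneg (hg v b k) (hQ v k)))
      (fun b => hg u b k) (fun b => hP u b k)
    refine ⟨_, ⟨fun u b k => if b = c u k then 1 else 0, fun u k => ∑ b, P u b k,
      fun u b k => ?_, fun u k => by simp, hQ, fun u => ?_, rfl⟩, ?_⟩
    · by_cases h : b = c u k <;> simp [h]
    · rw [Finset.sum_comm]
      exact hPb u
    · refine Finset.sum_le_sum fun u _ => ?_
      rw [Finset.sum_comm, Finset.sum_comm (s := (Finset.univ : Finset B))]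
      refine Finset.sum_le_sum fun k _ => ?_
      simp only [ite_mul, one_mul, zero_mul, Finset.sum_ite_eq', Finset.mem_univ, if_true]
      rw [← Finset.mul_sum]
      refine mul_le_mul_of_nonneg_left (le_trans (le_of_eq ?_) (hc u k)) (hW k).le
      refine Finset.sum_congr rfl fun b _ => ?_
      rw [sum_erase_prod]
      simp only [Finset.mul_sum, add_assoc]
end

section
/- For every feasible point (γ,P) of the mixed-integer problem (1), the assignment P'(u,b,k) := γ(u,b,k)·P(u,k) is a feasible point of the continuous problem (2) and satisfies F₂(P') ≥ F₁(γ,P). Consequently the optimal value of problem (2) is at least the optimal value of problem (1). -/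
/-!
Each user is associated with at most one base-station per band, so the powers `γ u b k * P u k`
sum over `b` to at most `P u k`; this gives feasibility. For the objectives, compare term by term:
if `γ u b k = 0`, the left term vanishes and the right one is nonnegative. If `γ u b k = 1`, the
signal powers agree, and the interference on the right is at most that on the left
(`interference_le`), because the total received power does not increase and the removed signal is
the same on both sides.
-/

/-- For an active association `γ u b k = 1`, the interference in the continuous problem is at most
the one in the mixed-integer problem. Here `b` and the band are fixed, so `h v`, `a v b'` and `p v`
stand for `g v b k`, `γ v b' k` and `P v k`. -/
lemma interference_le {U B : Type*} [Fintype U] [Fintype B] [DecidableEq U] [DecidableEq B]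
    (h p : U → ℝ) (a : U → B → ℝ) (hh : ∀ v, 0 ≤ h v) (hp : ∀ v, 0 ≤ p v)
    (ha : ∀ v, ∑ b, a v b ≤ 1) (u : U) (b : B) (hub : a u b = 1) :
    ∑ q ∈ (Finset.univ : Finset (U × B)).erase (u, b), h q.1 * (a q.1 q.2 * p q.1)
      ≤ ∑ v ∈ Finset.univ.erase u, h v * p v := by
  have total : ∑ q : U × B, h q.1 * (a q.1 q.2 * p q.1) ≤ ∑ v, h v * p v := by
    rw [Fintype.sum_prod_type]
    refine Finset.sum_le_sum fun v _ => ?_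
    dsimp only
    rw [← Finset.mul_sum, ← Finset.sum_mul]
    exact mul_le_mul_of_nonneg_left (mul_le_of_le_one_left (hp v) (ha v)) (hh v)
  rw [← Finset.add_sum_erase _ _ (Finset.mem_univ (u, b)),
    ← Finset.add_sum_erase _ _ (Finset.mem_univ u)] at total
  simp only [hub, one_mul] at total
  linarith


/-- For every feasible point (γ, P) of the mixed-integer problem (1), the point
P'(u,b,k) := γ(u,b,k)·P(u,k) is feasible for the continuous problem (2) and
achieves at least as large an objective value: F₂(P') ≥ F₁(γ,P). -/
theorem continuous_dominates_mixed_integer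
    (U B K : Type*) [Fintype U] [Fintype B] [Fintype K]
    [Nonempty U] [Nonempty B] [Nonempty K]
    [DecidableEq U] [DecidableEq B]
    (g : U → B → K → ℝ) (σ2 : B → K → ℝ) (W : K → ℝ) (Pbar : U → ℝ)
    (hg : ∀ u b k, 0 ≤ g u b k) (hσ : ∀ b k, 0 < σ2 b k)
    (hW : ∀ k, 0 < W k) (hPbar : ∀ u, 0 < Pbar u)
    (γ : U → B → K → ℝ) (P : U → K → ℝ)
    (hγ01 : ∀ u b k, γ u b k = 0 ∨ γ u b k = 1)
    (hγsum : ∀ u k, (∑ b, γ u b k) ≤ 1)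
    (hP0 : ∀ u k, 0 ≤ P u k)
    (hPsum : ∀ u, (∑ k, P u k) ≤ Pbar u) :
    (∀ u b k, 0 ≤ γ u b k * P u k) ∧
    (∀ u, (∑ b, ∑ k, γ u b k * P u k) ≤ Pbar u) ∧
    (∑ u, ∑ b, ∑ k, γ u b k * W k *
        Real.logb 2 (1 + g u b k * P u k /
          (σ2 b k + ∑ v ∈ Finset.univ.erase u, g v b k * P v k)))
      ≤
    (∑ u, ∑ b, ∑ k, W k *
        Real.logb 2 (1 + g u b k * (γ u b k * P u k) /
          (σ2 b k + ∑ p ∈ (Finset.univ : Finset (U × B)).erase (u, b),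
            g p.1 b k * (γ p.1 p.2 k * P p.1 k)))) := by
  have hγ0 : ∀ u b k, 0 ≤ γ u b k := fun u b k => by
    rcases hγ01 u b k with h | h <;> simp [h]
  have hQ : ∀ u b k, 0 ≤ γ u b k * P u k := fun u b k => mul_nonneg (hγ0 u b k) (hP0 u k)
  refine ⟨hQ, fun u => ?_, ?_⟩
  · rw [Finset.sum_comm]
    refine le_trans (Finset.sum_le_sum fun k _ => ?_) (hPsum u)
    rw [← Finset.sum_mul]
    exact mul_le_of_le_one_left (hP0 u k) (hγsum u k)
  · refine Finset.sum_le_sum fun u _ => Finset.sum_le_sum fun b _ =>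
      Finset.sum_le_sum fun k _ => ?_
    rcases hγ01 u b k with h | h
    · simp [h]
    · have hI0 : 0 ≤ ∑ p ∈ (Finset.univ : Finset (U × B)).erase (u, b),
          g p.1 b k * (γ p.1 p.2 k * P p.1 k) :=
        Finset.sum_nonneg fun p _ => mul_nonneg (hg _ _ _) (hQ _ _ _)
      have hI := interference_le (fun v => g v b k) (fun v => P v k) (fun v b' => γ v b' k)
        (fun v => hg v b k) (fun v => hP0 v k) (fun v => hγsum v k) u b h
      have hS : 0 ≤ g u b k * P u k := mul_nonneg (hg u b k) (hP0 u k)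
      have hN := hσ b k
      simp only [h, one_mul]
      refine mul_le_mul_of_nonneg_left ?_ (hW k).le
      refine Real.logb_le_logb_of_le (by norm_num) ?_ ?_
      · have := div_nonneg hS (hN.le.trans (le_add_of_nonneg_right (hI0.trans hI)))
        linarith
      · gcongr 1 + ?_
        exact div_le_div_of_nonneg_left hS (by linarith) (by linarith)
end

section
/- For every feasible point P of the continuous problem (2) there exists a feasible point (γ,P') of the mixed-integer problem (1) with F₁(γ,P') ≥ F₂(P). Consequently the optimal value of problem (1) is at least the optimal value of problem (2). (One such point is obtained by setting P'(u,k) := Σ_{b} P(u,b,k) and letting γ select, for each user u and band k, a base-station b maximizing g(u,b,k)P'(u,k)/(σ²(b,k) + Σ_{ũ≠u} g(ũ,b,k)P'(ũ,k)).) -/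
/-! Put `P' u k = ∑ b, P u b k` and let `γ` select, for each `(u, k)`, a base-station maximizing the
rate `log₂ (1 + SINR)` under the powers `P'`. Fix `(u, k)`, let `T = P' u k`, and let `I b` be noise
plus interference from the other users at base-station `b`. If `x b = P u b k / T` is the fraction
of the power that the continuous solution assigns to `b`, then in problem (2) the signal
`x b * (g T)` is received against `I b + (g T - x b * (g T))`, because the user's remaining power
acts as self-interference. Bernoulli's inequality bounds the resulting rate by `x b` times the rate
`log₂ (1 + g T / I b)` (`logb_fraction_le`). The fractions `x b` add up to at most one, so the sum
over `b` is at most the largest of the rates `log₂ (1 + g T / I b)`, which is the one selected by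
`γ`. -/

/-- Splitting off a fraction `x` of a signal `a`, with the rest treated as interference, yields at
most the fraction `x` of the full rate. This is `(1 + s) ^ x ≤ 1 + x * s` with
`s = -a / (I + a)`. -/
lemma logb_fraction_le {I a x : ℝ} (hI : 0 < I) (ha : 0 ≤ a) (hx0 : 0 ≤ x) (hx1 : x ≤ 1) :
    Real.logb 2 (1 + x * a / (I + (a - x * a))) ≤ x * Real.logb 2 (1 + a / I) := by
  have hxa : x * a ≤ a := mul_le_of_le_one_left ha hx1
  have hd : 0 < I + (a - x * a) := by linarith
  have hIa : 0 < I + a := by linarith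
  have e1 : 1 + x * a / (I + (a - x * a)) = (1 + x * (-a / (I + a)))⁻¹ := by
    have h : 1 + x * (-a / (I + a)) = (I + (a - x * a)) / (I + a) := by
      field_simp
      ring
    rw [h, inv_div, eq_div_iff hd.ne', add_mul, div_mul_cancel₀ _ hd.ne']
    ring
  have e2 : 1 + a / I = (1 + -a / (I + a))⁻¹ := by
    have h : 1 + -a / (I + a) = I / (I + a) := by
      field_simp
      ring
    rw [h, inv_div]
    field_simp
  have hs : 0 < 1 + -a / (I + a) := by
    have h : 0 < 1 + a / I := by positivity
    rw [e2] at h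
    exact inv_pos.mp h
  have bern := rpow_one_add_le_one_add_mul_self (by linarith : -1 ≤ -a / (I + a)) hx0 hx1
  have hlog := Real.logb_le_logb_of_le (b := 2) (by norm_num) (Real.rpow_pos_of_pos hs x) bern
  rw [Real.logb_rpow_eq_mul_logb_of_pos hs] at hlog
  rw [e1, e2, Real.logb_inv, Real.logb_inv]
  linarith

/-- The interference in problem (2) is the interference of the other users under the total powers,
plus the self-interference of `u` through its power assigned to the other base-stations. -/
lemma interference_eq {U B : Type*} [Fintype U] [Fintype B] [DecidableEq U] [DecidableEq B]
    (h : U → ℝ) (Q : U → B → ℝ) (u : U) (b : B) :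
    ∑ p ∈ (Finset.univ : Finset (U × B)).erase (u, b), h p.1 * Q p.1 p.2 =
      (∑ v ∈ Finset.univ.erase u, h v * ∑ b', Q v b') +
        (h u * ∑ b', Q u b' - h u * Q u b) := by
  have h1 := Finset.add_sum_erase (Finset.univ : Finset (U × B))
    (fun p => h p.1 * Q p.1 p.2) (Finset.mem_univ (u, b))
  have h2 := Finset.add_sum_erase (Finset.univ : Finset U)
    (fun v => h v * ∑ b', Q v b') (Finset.mem_univ u)
  have h3 : ∑ p : U × B, h p.1 * Q p.1 p.2 = ∑ v, h v * ∑ b', Q v b' := by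
    simp only [Fintype.sum_prod_type, Finset.mul_sum]
  simp only at h1 h2
  linarith

/-- For every feasible point P of the continuous problem (2) there is a feasible
point (γ, P') of the mixed-integer problem (1) with F₁(γ,P') ≥ F₂(P); hence the
optimal value of problem (1) is at least that of problem (2). -/
theorem mixed_integer_dominates_continuous
    (U B K : Type*) [Fintype U] [Fintype B] [Fintype K]
    [Nonempty U] [Nonempty B] [Nonempty K]
    [DecidableEq U] [DecidableEq B]
    (g : U → B → K → ℝ) (σ2 : B → K → ℝ) (W : K → ℝ) (Pbar : U → ℝ)
    (hg : ∀ u b k, 0 ≤ g u b k) (hσ : ∀ b k, 0 < σ2 b k)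
    (hW : ∀ k, 0 < W k) (hPbar : ∀ u, 0 < Pbar u)
    (P : U → B → K → ℝ)
    (hP0 : ∀ u b k, 0 ≤ P u b k)
    (hPsum : ∀ u, (∑ b, ∑ k, P u b k) ≤ Pbar u) :
    ∃ (γ : U → B → K → ℝ) (P' : U → K → ℝ),
      (∀ u b k, γ u b k = 0 ∨ γ u b k = 1) ∧
      (∀ u k, (∑ b, γ u b k) ≤ 1) ∧
      (∀ u k, 0 ≤ P' u k) ∧
      (∀ u, (∑ k, P' u k) ≤ Pbar u) ∧
      (∑ u, ∑ b, ∑ k, W k *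
          Real.logb 2 (1 + g u b k * P u b k /
            (σ2 b k + ∑ p ∈ (Finset.univ : Finset (U × B)).erase (u, b),
              g p.1 b k * P p.1 p.2 k)))
        ≤
      (∑ u, ∑ b, ∑ k, γ u b k * W k *
          Real.logb 2 (1 + g u b k * P' u k /
            (σ2 b k + ∑ v ∈ Finset.univ.erase u, g v b k * P' v k))) := by
  classical
  set P' : U → K → ℝ := fun u k => ∑ b, P u b k with hP'
  have hP'0 : ∀ u k, 0 ≤ P' u k := fun u k => Finset.sum_nonneg fun b _ => hP0 u b k
  set R : U → B → K → ℝ := fun u b k => Real.logb 2 (1 + g u b k * P' u k /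
    (σ2 b k + ∑ v ∈ Finset.univ.erase u, g v b k * P' v k)) with hR
  have hI : ∀ u b k, 0 < σ2 b k + ∑ v ∈ Finset.univ.erase u, g v b k * P' v k := fun u b k =>
    add_pos_of_pos_of_nonneg (hσ b k)
      (Finset.sum_nonneg fun v _ => mul_nonneg (hg v b k) (hP'0 v k))
  have hR0 : ∀ u b k, 0 ≤ R u b k := fun u b k =>
    Real.logb_nonneg (by norm_num) (le_add_of_nonneg_right
      (div_nonneg (mul_nonneg (hg u b k) (hP'0 u k)) (hI u b k).le))
  choose m hm using fun (u : U) (k : K) => Finite.exists_max (fun b => R u b k)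
  have hrate : ∀ u b k, Real.logb 2 (1 + g u b k * P u b k /
      (σ2 b k + ∑ p ∈ (Finset.univ : Finset (U × B)).erase (u, b),
        g p.1 b k * P p.1 p.2 k)) ≤ P u b k / P' u k * R u b k := by
    intro u b k
    have hle : P u b k ≤ P' u k :=
      Finset.single_le_sum (f := fun b => P u b k) (fun b _ => hP0 u b k) (Finset.mem_univ b)
    -- If `P' u k = 0`, then `P u b k = 0` too and the fraction is `0 / 0 = 0`.
    have hx : P u b k / P' u k * P' u k = P u b k :=
      div_mul_cancel_of_imp fun h0 => le_antisymm (h0 ▸ hle) (hP0 u b k)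
    have key := logb_fraction_le (hI u b k) (mul_nonneg (hg u b k) (hP'0 u k))
      (div_nonneg (hP0 u b k) (hP'0 u k)) (div_le_one_of_le₀ hle (hP'0 u k))
    rw [mul_left_comm, hx, add_assoc] at key
    rw [interference_eq (fun v => g v b k) (fun v b' => P v b' k) u b]
    exact key
  refine ⟨fun u b k => if b = m u k then 1 else 0, P', ?_, ?_, hP'0, ?_, ?_⟩
  · intro u b k
    by_cases h : b = m u k <;> simp [h]
  · intro u k
    simp
  · intro u
    rw [hP', Finset.sum_comm]
    exact hPsum u
  · refine Finset.sum_le_sum fun u _ => ?_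
    rw [Finset.sum_comm, Finset.sum_comm (s := (Finset.univ : Finset B))]
    refine Finset.sum_le_sum fun k _ => ?_
    calc _ ≤ ∑ b, W k * (P u b k / P' u k * R u (m u k) k) :=
          Finset.sum_le_sum fun b _ => mul_le_mul_of_nonneg_left
            ((hrate u b k).trans (mul_le_mul_of_nonneg_left (hm u k b)
              (div_nonneg (hP0 u b k) (hP'0 u k)))) (hW k).le
      _ = W k * (P' u k / P' u k * R u (m u k) k) := by
          rw [← Finset.mul_sum, ← Finset.sum_mul, ← Finset.sum_div]
      _ ≤ W k * R u (m u k) k :=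
          mul_le_mul_of_nonneg_left
            (mul_le_of_le_one_left (hR0 u _ k) (div_self_le_one _)) (hW k).le
      _ = _ := by simp [hR]
end

section
/- Single-receiver power concentration is optimal: let ℬ be a finite nonempty index set, let c(b) ≥ 0, N(b) > 0 for each b ∈ ℬ, let P > 0, and let P(b) ≥ 0 satisfy Σ_{b∈ℬ} P(b) = P. Then Σ_{b∈ℬ} log₂(1 + c(b)P(b)/(N(b) + c(b)·(P − P(b)))) ≤ max_{b∈ℬ} log₂(1 + c(b)·P/N(b)). In particular, for a single user with total power P, splitting its transmission among several base-stations (each decoding its own part and treating the parts intended for other base-stations as interference) never achieves a larger sum rate than devoting the entire power P to the base-station with the highest SINR. -/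
/-!
Write `s = c P / N` for the SINR of full-power transmission to a base-station and `x = q / P` for the
fraction of the power intended for it. The rate obtained there is
`log (1 + s) - log (1 + (1 - x) s)`, and Bernoulli's inequality `(1 + s) ^ (1 - x) ≤ 1 + (1 - x) s`
bounds it by `x * log (1 + s)`. Since the fractions sum to `1`, the sum rate is at most a
weighted average of the full-power rates, hence at most their maximum.
-/

/-- A base-station receiving the power fraction `q / P` achieves at most that fraction of its
full-power rate. -/
lemma split_rate_le (c N P q : ℝ) (hc : 0 ≤ c) (hN : 0 < N) (hP : 0 < P)
    (hq : 0 ≤ q) (hqP : q ≤ P) :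
    Real.logb 2 (1 + c * q / (N + c * (P - q))) ≤ q / P * Real.logb 2 (1 + c * P / N) := by
  have hs : 0 ≤ c * P / N := by positivity
  have hx0 : 0 ≤ q / P := by positivity
  have hx1 : q / P ≤ 1 := (div_le_one hP).2 hqP
  have hD : 0 < N + c * (P - q) := by
    have := mul_nonneg hc (sub_nonneg.2 hqP)
    linarith
  have hE : 0 < 1 + (1 - q / P) * (c * P / N) := by
    have := mul_nonneg (sub_nonneg.2 hx1) hs
    linarith
  have hrate : 1 + c * q / (N + c * (P - q))
      = (1 + c * P / N) / (1 + (1 - q / P) * (c * P / N)) := by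
    have hE' : 1 + (1 - q / P) * (c * P / N) = (N + c * (P - q)) / N := by
      field_simp
    rw [hE']
    field_simp
    ring
  have hbern := rpow_one_add_le_one_add_mul_self (s := c * P / N) (by linarith)
    (sub_nonneg.2 hx1) (by linarith)
  have hlog := Real.logb_le_logb_of_le one_lt_two
    (Real.rpow_pos_of_pos (by linarith) _) hbern
  rw [Real.logb_rpow_eq_mul_logb_of_pos (by linarith)] at hlog
  rw [hrate, Real.logb_div (by linarith) hE.ne']
  linarith

/-- Single-receiver power concentration is optimal: splitting a user's power P
among several base-stations (each decoding its own part and treating the rest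
as self-interference) never beats devoting all of P to the base-station with
the highest SINR. -/
theorem single_receiver_concentration_optimal
    (B : Type*) [Fintype B] [Nonempty B]
    (c N : B → ℝ) (hc : ∀ b, 0 ≤ c b) (hN : ∀ b, 0 < N b)
    (P : ℝ) (hP : 0 < P)
    (Pb : B → ℝ) (hPb : ∀ b, 0 ≤ Pb b) (hsum : (∑ b, Pb b) = P) :
    (∑ b, Real.logb 2 (1 + c b * Pb b / (N b + c b * (P - Pb b))))
      ≤
    Finset.univ.sup' Finset.univ_nonempty
      (fun b => Real.logb 2 (1 + c b * P / N b)) := by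
  set M := Finset.univ.sup' Finset.univ_nonempty
    (fun b => Real.logb 2 (1 + c b * P / N b))
  have hle : ∀ b, Pb b ≤ P := fun b =>
    hsum ▸ Finset.single_le_sum (fun i _ => hPb i) (Finset.mem_univ b)
  calc ∑ b, Real.logb 2 (1 + c b * Pb b / (N b + c b * (P - Pb b)))
      ≤ ∑ b, Pb b / P * M := by
        refine Finset.sum_le_sum fun b _ => ?_
        refine (split_rate_le _ _ _ _ (hc b) (hN b) hP (hPb b) (hle b)).trans ?_
        exact mul_le_mul_of_nonneg_left
          (Finset.le_sup' (fun b => Real.logb 2 (1 + c b * P / N b)) (Finset.mem_univ b))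
          (div_nonneg (hPb b) hP.le)
    _ = M := by
        rw [← Finset.sum_mul, ← Finset.sum_div, hsum, div_self hP.ne', one_mul]
end

section
/- No gain from multi-receiver splitting within problem (2): for every feasible point P of the continuous problem (2) there exists a feasible point P' of problem (2) such that F₂(P') ≥ F₂(P) and, for every user u and every frequency band k, there is at most one base-station b with P'(u,b,k) > 0. -/
/-!
Let `T u k = ∑ b, P u b k` be the power user `u` spends on band `k`. The total received power
`D b k = σ2 b k + ∑ u, g u b k * T u k` depends on `P` only through `T`, and the rate of `(u, b)` on
band `k` is `log D - log (D - g u b k * P u b k)`. As long as `T` is kept, the rates of distinct pairs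
`(u, k)` therefore decouple. Each rate is convex in `P u b k` and vanishes at `0`, so it is at most
`P u b k / T u k` times the rate that base-station `b` alone would achieve with the full power `T u k`.
Summing over `b`, the rate of `(u, k)` is at most that of the best single base-station. Hence it
suffices to move all of `T u k` to this base-station, for all `(u, k)` simultaneously.
-/

/-- The rate as a function of the signal power `x`, out of total received power `D`. -/
noncomputable def splitRate (D x : ℝ) : ℝ := Real.logb 2 (1 + x / (D - x))

lemma splitRate_nonneg {D x : ℝ} (hx : 0 ≤ x) (hD : x < D) : 0 ≤ splitRate D x := by
  have h : 0 ≤ x / (D - x) := div_nonneg hx (by linarith)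
  exact Real.logb_nonneg (by norm_num) (by linarith)

/-- Convexity of the rate on `[0, y]`, together with its vanishing at `0`. -/
lemma splitRate_mul_le {D y t : ℝ} (hy : 0 ≤ y) (hD : y < D) (ht0 : 0 ≤ t) (ht1 : t ≤ 1) :
    splitRate D (t * y) ≤ t * splitRate D y := by
  have hty : t * y ≤ y := mul_le_of_le_one_left hy ht1
  have hD0 : 0 < D := by linarith
  have key : ∀ x, x < D → splitRate D x = (Real.log D - Real.log (D - x)) / Real.log 2 := by
    intro x hx
    have hne : D - x ≠ 0 := by linarith
    have h : 1 + x / (D - x) = D / (D - x) := by field_simp; ring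
    rw [splitRate, h, Real.logb, Real.log_div hD0.ne' hne]
  rw [key _ (by linarith), key _ hD, ← mul_div_assoc]
  have hc := strictConcaveOn_log_Ioi.concaveOn.2 (Set.mem_Ioi.2 hD0)
    (Set.mem_Ioi.2 (sub_pos.2 hD)) (sub_nonneg.2 ht1) ht0 (by ring)
  simp only [smul_eq_mul] at hc
  have h : (1 - t) * D + t * (D - y) = D - t * y := by ring
  rw [h] at hc
  have := Real.log_pos (show (1 : ℝ) < 2 by norm_num)
  gcongr
  linarith

/-- Splitting the power `∑ b, p b` among receivers is no better than giving all of it to a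
receiver `m` that makes the best use of it. -/
lemma sum_splitRate_le {B : Type*} [Fintype B] (D c p : B → ℝ) (hc : ∀ b, 0 ≤ c b)
    (hp : ∀ b, 0 ≤ p b) (hD : ∀ b, c b * ∑ i, p i < D b) (m : B)
    (hm : ∀ b, splitRate (D b) (c b * ∑ i, p i) ≤ splitRate (D m) (c m * ∑ i, p i)) :
    ∑ b, splitRate (D b) (c b * p b) ≤ splitRate (D m) (c m * ∑ i, p i) := by
  set T := ∑ i, p i with hT
  have hT0 : 0 ≤ T := Finset.sum_nonneg fun i _ => hp i
  have hle : ∀ b, p b ≤ T := fun b =>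
    Finset.single_le_sum (f := p) (fun i _ => hp i) (Finset.mem_univ b)
  -- For `T = 0` the ratio `p b / T` is the junk value `0`, which is harmless as `p b = 0`.
  have hpt : ∀ b, p b = p b / T * T := by
    intro b
    rcases hT0.eq_or_lt with h | h
    · have := hle b
      have := hp b
      rw [← h]; linarith
    · field_simp
  have hM := splitRate_nonneg (mul_nonneg (hc m) hT0) (hD m)
  calc ∑ b, splitRate (D b) (c b * p b)
      ≤ ∑ b, p b / T * splitRate (D m) (c m * T) := by
        refine Finset.sum_le_sum fun b _ => ?_
        have ht0 : 0 ≤ p b / T := div_nonneg (hp b) hT0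
        have h := splitRate_mul_le (mul_nonneg (hc b) hT0) (hD b) ht0
          (div_le_one_of_le₀ (hle b) hT0)
        have e : p b / T * (c b * T) = c b * p b := by
          rw [mul_left_comm, ← hpt b]
        rw [e] at h
        exact h.trans (mul_le_mul_of_nonneg_left (hm b) ht0)
    _ = T / T * splitRate (D m) (c m * T) := by
        rw [← Finset.sum_mul, ← Finset.sum_div]
    _ ≤ splitRate (D m) (c m * T) := mul_le_of_le_one_left hM (div_self_le_one T)


/-- No gain from multi-receiver splitting within problem (2): every feasible
point P of the continuous problem (2) is dominated by a feasible point P' in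
which each user uses at most one base-station on each frequency band. -/
theorem no_gain_from_multireceiver_splitting
    (U B K : Type*) [Fintype U] [Fintype B] [Fintype K]
    [Nonempty U] [Nonempty B] [Nonempty K]
    [DecidableEq U] [DecidableEq B]
    (g : U → B → K → ℝ) (σ2 : B → K → ℝ) (W : K → ℝ) (Pbar : U → ℝ)
    (hg : ∀ u b k, 0 ≤ g u b k) (hσ : ∀ b k, 0 < σ2 b k)
    (hW : ∀ k, 0 < W k) (hPbar : ∀ u, 0 < Pbar u)
    (P : U → B → K → ℝ)
    (hP0 : ∀ u b k, 0 ≤ P u b k)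
    (hPsum : ∀ u, (∑ b, ∑ k, P u b k) ≤ Pbar u) :
    ∃ P' : U → B → K → ℝ,
      (∀ u b k, 0 ≤ P' u b k) ∧
      (∀ u, (∑ b, ∑ k, P' u b k) ≤ Pbar u) ∧
      (∑ u, ∑ b, ∑ k, W k *
          Real.logb 2 (1 + g u b k * P u b k /
            (σ2 b k + ∑ p ∈ (Finset.univ : Finset (U × B)).erase (u, b),
              g p.1 b k * P p.1 p.2 k)))
        ≤
      (∑ u, ∑ b, ∑ k, W k *
          Real.logb 2 (1 + g u b k * P' u b k /
            (σ2 b k + ∑ p ∈ (Finset.univ : Finset (U × B)).erase (u, b),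
              g p.1 b k * P' p.1 p.2 k))) ∧
      (∀ u k b₁ b₂, 0 < P' u b₁ k → 0 < P' u b₂ k → b₁ = b₂) := by
  classical
  set T : U → K → ℝ := fun u k => ∑ b, P u b k with hT
  set D : B → K → ℝ := fun b k => σ2 b k + ∑ u, g u b k * T u k with hD
  have hT0 : ∀ u k, 0 ≤ T u k := fun u k => Finset.sum_nonneg fun b _ => hP0 u b k
  have hDlt : ∀ u b k, g u b k * T u k < D b k := by
    intro u b k
    have h := Finset.single_le_sum (f := fun v => g v b k * T v k)
      (fun v _ => mul_nonneg (hg v b k) (hT0 v k)) (Finset.mem_univ u)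
    have := hσ b k
    simp only [hD] at *
    linarith
  have hrate : ∀ Q : U → B → K → ℝ, (∀ u k, ∑ b, Q u b k = T u k) →
      (∑ u, ∑ b, ∑ k, W k *
          Real.logb 2 (1 + g u b k * Q u b k /
            (σ2 b k + ∑ p ∈ (Finset.univ : Finset (U × B)).erase (u, b),
              g p.1 b k * Q p.1 p.2 k))) =
      ∑ u, ∑ k, W k * ∑ b, splitRate (D b k) (g u b k * Q u b k) := by
    intro Q hQ
    refine Finset.sum_congr rfl fun u _ => ?_
    rw [Finset.sum_comm]
    refine Finset.sum_congr rfl fun k _ => ?_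
    rw [Finset.mul_sum]
    refine Finset.sum_congr rfl fun b _ => ?_
    have h1 := Finset.add_sum_erase (Finset.univ : Finset (U × B))
      (fun p => g p.1 b k * Q p.1 p.2 k) (Finset.mem_univ (u, b))
    have h2 : ∑ p : U × B, g p.1 b k * Q p.1 p.2 k = ∑ v, g v b k * T v k := by
      rw [Fintype.sum_prod_type]
      refine Finset.sum_congr rfl fun v _ => ?_
      rw [← hQ v k, Finset.mul_sum]
    have h3 : σ2 b k + ∑ p ∈ (Finset.univ : Finset (U × B)).erase (u, b),
        g p.1 b k * Q p.1 p.2 k = D b k - g u b k * Q u b k := by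
      simp only [hD]
      rw [← h2, ← h1]
      ring
    rw [h3, splitRate]
  choose m hm using fun (u : U) (k : K) =>
    Finite.exists_max fun b => splitRate (D b k) (g u b k * T u k)
  have hQT : ∀ u k, ∑ b, (if b = m u k then T u k else 0) = T u k := by
    intro u k
    simp
  refine ⟨fun u b k => if b = m u k then T u k else 0, ?_, ?_, ?_, ?_⟩
  · intro u b k
    dsimp only
    split_ifs
    exacts [hT0 u k, le_rfl]
  · intro u
    rw [Finset.sum_comm, Finset.sum_congr rfl fun k _ => hQT u k, hT, Finset.sum_comm]
    exact hPsum u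
  · rw [hrate P fun _ _ => rfl, hrate (fun u b k => if b = m u k then T u k else 0) hQT]
    refine Finset.sum_le_sum fun u _ => Finset.sum_le_sum fun k _ =>
      mul_le_mul_of_nonneg_left ?_ (hW k).le
    refine (sum_splitRate_le (fun b => D b k) (fun b => g u b k) (fun b => P u b k)
      (fun b => hg u b k) (fun b => hP0 u b k) (fun b => hDlt u b k) (m u k) (hm u k)).trans ?_
    -- Every receiver other than `m u k` now contributes `splitRate _ 0 = 0`.
    refine ((Finset.sum_eq_single (m u k) ?_ ?_).trans ?_).ge
    · intro b _ hb
      simp [hb, splitRate]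
    · simp
    · simp [hT]
  · intro u k b₁ b₂ h₁ h₂
    dsimp only at h₁ h₂
    split_ifs at h₁ h₂ with e₁ e₂
    all_goals first
      | exact e₁.trans e₂.symm
      | exact absurd ‹(0 : ℝ) < 0› (lt_irrefl 0)
end
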